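/- Let H be the complete s-uniform t-partite hypergraph with sides V_1, …, V_t, and let I(H) be its edge ideal in R = K[x_v : v ∈ V]. Then the minimal number of generators of I(H) equals the height of I(H) plus 1 (i.e., R/I(H) is almost complete intersection) if and only if one of the following holds: (a) s = 2, t = 3 and |V_1| = |V_2| = |V_3| = 1 (H is the 3-cycle C_3); or (b) s = t, exactly one side has cardinality 2 and all other t−1 sides have cardinality 1 (H has exactly two edges, agreeing outside that side). -/

import Mathlib

open Finset

/-- The vertex set `V = V_1 ∪ ⋯ ∪ V_t` of the multipartite hypergraph with sides `Vs`. -/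
def vertexSet {α : Type*} [DecidableEq α] {t : ℕ} (Vs : Fin t → Finset α) : Finset α :=
  Finset.univ.biUnion Vs

/-- `e` is an edge of the complete `s`-uniform `t`-partite hypergraph with sides `Vs`:
`e ⊆ V`, `|e| = s`, and `|e ∩ V_i| ≤ 1` for every side. -/
def IsEdge {α : Type*} [DecidableEq α] {t : ℕ} (Vs : Fin t → Finset α) (s : ℕ)
    (e : Finset α) : Prop :=
  e ⊆ vertexSet Vs ∧ e.card = s ∧ ∀ i : Fin t, (e ∩ Vs i).card ≤ 1

/-- `F` is an independent set: a subset of `V` containing no edge. -/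
def Indep {α : Type*} [DecidableEq α] {t : ℕ} (Vs : Fin t → Finset α) (s : ℕ)
    (F : Finset α) : Prop :=
  F ⊆ vertexSet Vs ∧ ∀ e : Finset α, IsEdge Vs s e → ¬ e ⊆ F

/-- The edge ideal `I(H) = (∏_{v ∈ e} x_v : e ∈ E(H))` of the complete `s`-uniform
`t`-partite hypergraph, in the polynomial ring `K[x_v : v ∈ α]`. -/
noncomputable def edgeIdeal (K : Type*) [Field K] {α : Type*} [DecidableEq α] {t : ℕ}
    (Vs : Fin t → Finset α) (s : ℕ) : Ideal (MvPolynomial α K) :=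
  Ideal.span {m : MvPolynomial α K |
    ∃ e : Finset α, IsEdge Vs s e ∧ m = ∏ v ∈ e, MvPolynomial.X v}

/-- The height of an ideal: the infimum of the heights (in the prime spectrum, ordered
by inclusion) of the primes minimal over it. -/
noncomputable def idealHeight {R : Type*} [CommRing R] (I : Ideal R) : ℕ∞ :=
  ⨅ (p : PrimeSpectrum R) (_ : p.asIdeal ∈ I.minimalPrimes), Order.height p

/-- The minimal number of generators of an ideal: the least cardinality of a (finite)
generating set. -/
noncomputable def minNumGens {R : Type*} [CommRing R] (I : Ideal R) : ℕ :=
  sInf {n : ℕ | ∃ G : Finset R, G.card = n ∧ Ideal.span (G : Set R) = I}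


lemma idealHeight_eq_height {R : Type*} [CommRing R] (I : Ideal R) :
    idealHeight I = I.height := by
  rw [Ideal.height_eq_inf_minimalPrimes, idealHeight]
  apply le_antisymm
  · refine le_iInf₂ fun J hJ => ?_
    have := hJ.isPrime
    refine (iInf₂_le (⟨J, this⟩ : PrimeSpectrum R) hJ).trans ?_
    rw [← PrimeSpectrum.height_eq_orderHeight]
  · refine le_iInf₂ fun p hp => ?_
    refine (iInf₂_le p.asIdeal hp).trans ?_
    rw [← PrimeSpectrum.height_eq_orderHeight]

lemma prod_X_eq {K : Type*} [Field K] {α : Type*} [DecidableEq α] (e : Finset α) :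
    (∏ v ∈ e, MvPolynomial.X v : MvPolynomial α K) =
      MvPolynomial.monomial (∑ v ∈ e, Finsupp.single v 1) 1 := by
  rw [MvPolynomial.monomial_sum_one]
  rfl

lemma ind_inj {α : Type*} [DecidableEq α] (e f : Finset α)
    (h : (∑ v ∈ e, Finsupp.single v 1 : α →₀ ℕ) = ∑ v ∈ f, Finsupp.single v 1) : e = f := by
  ext a
  have := DFunLike.congr_fun h a
  simp only [Finsupp.coe_finsetSum, Finset.sum_apply, Finsupp.single_apply,
    Finset.sum_ite_eq'] at this
  split_ifs at this <;> simp_all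

lemma ind_degree {α : Type*} [DecidableEq α] (e : Finset α) :
    Finsupp.degree (∑ v ∈ e, Finsupp.single v 1 : α →₀ ℕ) = e.card := by
  simp

lemma edgeIdeal_le_pow (K : Type*) [Field K] {α : Type*} [DecidableEq α] {t : ℕ}
    (Vs : Fin t → Finset α) (s : ℕ) :
    edgeIdeal K Vs s ≤ MvPolynomial.idealOfVars α K ^ s := by
  rw [edgeIdeal, Ideal.span_le]
  rintro m ⟨e, he, rfl⟩
  rw [prod_X_eq, SetLike.mem_coe, MvPolynomial.monomial_mem_pow_idealOfVars_iff _ _ one_ne_zero,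
    ind_degree, he.2.1]

lemma coeff_mul_edge (K : Type*) [Field K] {α : Type*} [DecidableEq α] {t : ℕ}
    (Vs : Fin t → Finset α) (s : ℕ) (a f : MvPolynomial α K) (hf : f ∈ edgeIdeal K Vs s)
    (d : α →₀ ℕ) (hd : Finsupp.degree d = s) :
    MvPolynomial.coeff d (a * f) = MvPolynomial.coeff 0 a * MvPolynomial.coeff d f := by
  have h := (MvPolynomial.mem_pow_idealOfVars_iff' _ _).1 (edgeIdeal_le_pow K Vs s hf)
  rw [MvPolynomial.coeff_mul, Finset.sum_eq_single (0, d)]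
  · rintro ⟨x, y⟩ hxy hne
    rw [Finset.HasAntidiagonal.mem_antidiagonal] at hxy
    simp only at hxy ⊢
    have hx : x ≠ 0 := by
      rintro rfl
      apply hne
      rw [← hxy, zero_add]
    have hx' : Finsupp.degree x ≠ 0 := by
      simpa [Finsupp.degree_eq_zero_iff] using hx
    have h2 : Finsupp.degree x + Finsupp.degree y = s := by rw [← map_add, hxy, hd]
    rw [h y (by omega), mul_zero]
  · intro h0
    simp at h0

open Classical in
noncomputable def edgeSet {α : Type*} [DecidableEq α] [Fintype α] {t : ℕ}
    (Vs : Fin t → Finset α) (s : ℕ) : Finset (Finset α) := Finset.univ.filter (IsEdge Vs s)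

lemma mem_edgeSet {α : Type*} [DecidableEq α] [Fintype α] {t : ℕ}
    (Vs : Fin t → Finset α) (s : ℕ) (e : Finset α) : e ∈ edgeSet Vs s ↔ IsEdge Vs s e := by
  simp [edgeSet]

lemma card_edge_le (K : Type*) [Field K] {α : Type*} [DecidableEq α] [Fintype α] {t : ℕ}
    (Vs : Fin t → Finset α) (s : ℕ) (G : Finset (MvPolynomial α K))
    (hG : Ideal.span (G : Set (MvPolynomial α K)) = edgeIdeal K Vs s) :
    (edgeSet Vs s).card ≤ G.card := by
  classical
  let L : MvPolynomial α K →ₗ[K] (edgeSet Vs s → K) :=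
    LinearMap.pi fun e => MvPolynomial.lcoeff K (∑ v ∈ e.1, Finsupp.single v 1 : α →₀ ℕ)
  have hL : ∀ f e, L f e = MvPolynomial.coeff (∑ v ∈ e.1, Finsupp.single v 1 : α →₀ ℕ) f :=
    fun f e => rfl
  have hdeg : ∀ e : edgeSet Vs s,
      Finsupp.degree (∑ v ∈ e.1, Finsupp.single v 1 : α →₀ ℕ) = s := fun e => by
    rw [ind_degree, ((mem_edgeSet _ _ _).1 e.2).2.1]
  have key : ∀ f ∈ Ideal.span (G : Set (MvPolynomial α K)),
      L f ∈ Submodule.span K ((G.image L : Finset _) : Set (edgeSet Vs s → K)) := by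
    intro f hf
    induction hf using Submodule.span_induction with
    | mem x hx => exact Submodule.subset_span (by simpa using ⟨x, hx, rfl⟩)
    | zero => simp
    | add x y _ _ hx hy => rw [map_add]; exact add_mem hx hy
    | smul a x hx0 hx =>
      have : L (a • x) = MvPolynomial.coeff 0 a • L x := by
        ext e
        rw [Pi.smul_apply, hL, hL, smul_eq_mul, smul_eq_mul]
        refine coeff_mul_edge K Vs s a x ?_ _ (hdeg e)
        rw [← hG]; exact hx0
      rw [this]
      exact Submodule.smul_mem _ _ hx
  have htop : Submodule.span K ((G.image L : Finset _) : Set (edgeSet Vs s → K)) = ⊤ := by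
    rw [eq_top_iff, ← (Pi.basisFun K (edgeSet Vs s)).span_eq, Submodule.span_le]
    rintro _ ⟨e, rfl⟩
    have h1 : (∏ v ∈ e.1, MvPolynomial.X v : MvPolynomial α K) ∈
        Ideal.span (G : Set (MvPolynomial α K)) := by
      rw [hG]
      exact Ideal.subset_span ⟨e.1, (mem_edgeSet _ _ _).1 e.2, rfl⟩
    have h2 := key _ h1
    suffices h4 : Pi.basisFun K (edgeSet Vs s) e = L (∏ v ∈ e.1, MvPolynomial.X v) by
      rw [h4]; exact h2
    ext e'
    rw [hL, prod_X_eq, MvPolynomial.coeff_monomial, Pi.basisFun_apply, Pi.single_apply]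
    by_cases h : e' = e
    · simp [h]
    · rw [if_neg h, if_neg]
      intro h'
      exact h (Subtype.ext (ind_inj _ _ h').symm)
  have h3 := finrank_span_finset_le_card (R := K) (G.image L)
  rw [Set.finrank, htop, finrank_top, Module.finrank_fintype_fun_eq_card, Fintype.card_coe] at h3
  exact h3.trans Finset.card_image_le

lemma minNumGens_edgeIdeal (K : Type*) [Field K] {α : Type*} [DecidableEq α] [Fintype α] {t : ℕ}
    (Vs : Fin t → Finset α) (s : ℕ) :
    minNumGens (edgeIdeal K Vs s) = (edgeSet Vs s).card := by
  classical
  have hmem : (edgeSet Vs s).card ∈ {n : ℕ | ∃ G : Finset (MvPolynomial α K), G.card = n ∧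
      Ideal.span (G : Set (MvPolynomial α K)) = edgeIdeal K Vs s} := by
    refine ⟨(edgeSet Vs s).image fun e => ∏ v ∈ e, MvPolynomial.X v, ?_, ?_⟩
    · apply Finset.card_image_of_injective
      intro e f h
      simp only [prod_X_eq] at h
      exact ind_inj _ _ (MvPolynomial.monomial_left_injective one_ne_zero h)
    · rw [edgeIdeal]
      congr 1
      ext m
      simp [mem_edgeSet, eq_comm]
  apply le_antisymm
  · exact Nat.sInf_le hmem
  · obtain ⟨G, hG, hG'⟩ := Nat.sInf_mem ⟨_, hmem⟩
    rw [minNumGens, ← hG]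
    exact card_edge_le K Vs s G hG'

lemma height_le_cover (K : Type*) [Field K] {α : Type*} [DecidableEq α] [Fintype α] {t : ℕ}
    (Vs : Fin t → Finset α) (s : ℕ) (C : Finset α)
    (hC : ∀ e, IsEdge Vs s e → ∃ v ∈ e, v ∈ C) :
    (edgeIdeal K Vs s).height ≤ C.card := by
  classical
  let S : Set (MvPolynomial α K) := MvPolynomial.X '' (C : Set α)
  have hS : S.Finite := C.finite_toSet.image _
  have h1 : edgeIdeal K Vs s ≤ Ideal.span S := by
    rw [edgeIdeal, Ideal.span_le]
    rintro m ⟨e, he, rfl⟩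
    obtain ⟨v, hv, hvC⟩ := hC e he
    exact Ideal.mem_of_dvd _ (Finset.dvd_prod_of_mem _ hv)
      (Ideal.subset_span ⟨v, hvC, rfl⟩)
  have h2 : Ideal.span S ≠ ⊤ := by
    intro h
    have : Ideal.span S ≤ RingHom.ker (MvPolynomial.constantCoeff (σ := α) (R := K)) := by
      rw [Ideal.span_le]
      rintro _ ⟨v, _, rfl⟩
      simp [RingHom.mem_ker]
    rw [h, top_le_iff] at this
    exact RingHom.ker_ne_top _ this
  refine (Ideal.height_mono h1).trans ((Ideal.height_le_spanFinrank _ h2).trans ?_)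
  have h3 : (Ideal.span S).spanFinrank ≤ S.ncard :=
    Submodule.spanFinrank_span_le_ncard_of_finite hS
  have h4 : S.ncard ≤ (C : Set α).ncard := Set.ncard_image_le C.finite_toSet
  rw [Set.ncard_coe_finset] at h4
  exact_mod_cast h3.trans h4

lemma one_le_height (K : Type*) [Field K] {α : Type*} [DecidableEq α] [Fintype α] {t : ℕ}
    (Vs : Fin t → Finset α) (s : ℕ) (e : Finset α) (he : IsEdge Vs s e) :
    1 ≤ (edgeIdeal K Vs s).height := by
  rw [Order.one_le_iff_ne_zero, Ne, Ideal.height_eq_zero_iff_eq_bot]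
  intro h
  have : (∏ v ∈ e, MvPolynomial.X v : MvPolynomial α K) ∈ edgeIdeal K Vs s :=
    Ideal.subset_span ⟨e, he, rfl⟩
  rw [h, Ideal.mem_bot, Finset.prod_eq_zero_iff] at this
  obtain ⟨v, _, hv⟩ := this
  exact MvPolynomial.X_ne_zero v hv

lemma two_le_height (K : Type*) [Field K] {α : Type*} [DecidableEq α] [Fintype α] {t : ℕ}
    (Vs : Fin t → Finset α) (a b c : α) (hab : a ≠ b) (hac : a ≠ c) (hbc : b ≠ c)
    (h1 : IsEdge Vs 2 {a, b}) (h2 : IsEdge Vs 2 {a, c}) (h3 : IsEdge Vs 2 {b, c}) :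
    2 ≤ (edgeIdeal K Vs 2).height := by
  classical
  have key : ∀ (p : Ideal (MvPolynomial α K)), p.IsPrime → ∀ v w : α, v ≠ w →
      MvPolynomial.X v ∈ p → MvPolynomial.X w ∈ p → 2 ≤ p.height := by
    intro p hp v w hvw hv hw
    have hq : (Ideal.span {(MvPolynomial.X v : MvPolynomial α K)}).IsPrime := by
      rw [Ideal.span_singleton_prime (MvPolynomial.X_ne_zero v)]
      exact MvPolynomial.X_prime
    have hlt : Ideal.span {(MvPolynomial.X v : MvPolynomial α K)} < p := by
      refine lt_of_le_of_ne ?_ ?_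
      · rw [Ideal.span_le]; simpa using hv
      · intro h
        rw [← h, Ideal.mem_span_singleton, MvPolynomial.X_dvd_X] at hw
        simp_all
    have h1 : 1 ≤ (Ideal.span {(MvPolynomial.X v : MvPolynomial α K)}).height := by
      rw [Order.one_le_iff_ne_zero, Ne, Ideal.height_eq_zero_iff_eq_bot,
        Ideal.span_singleton_eq_bot]
      exact MvPolynomial.X_ne_zero v
    have h2 := Ideal.height_add_one_le_of_lt_of_isPrime hlt
    calc (2 : ℕ∞) = 1 + 1 := by norm_num
      _ ≤ _ := add_le_add_left h1 1
      _ ≤ _ := h2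
  rw [Ideal.height_eq_inf_minimalPrimes]
  refine le_iInf₂ fun p hp => ?_
  have hpp := hp.isPrime
  have hm : ∀ x y : α, x ≠ y → IsEdge Vs 2 {x, y} →
      (MvPolynomial.X x : MvPolynomial α K) ∈ p ∨ (MvPolynomial.X y : MvPolynomial α K) ∈ p := by
    intro x y hxy he
    have : (∏ v ∈ ({x, y} : Finset α), MvPolynomial.X v : MvPolynomial α K) ∈ p :=
      hp.le (Ideal.subset_span ⟨_, he, rfl⟩)
    rw [Finset.prod_pair hxy] at this
    exact hpp.mem_or_mem this
  rcases hm a b hab h1 with ha | hb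
  · rcases hm b c hbc h3 with hb | hc
    · exact key p hpp a b hab ha hb
    · exact key p hpp a c hac ha hc
  · rcases hm a c hac h2 with ha | hc
    · exact key p hpp a b hab ha hb
    · exact key p hpp b c hbc hb hc

lemma exists_side {α : Type*} [DecidableEq α] [Fintype α] {t : ℕ} (Vs : Fin t → Finset α)
    (hdisj : ∀ i j : Fin t, i ≠ j → Disjoint (Vs i) (Vs j))
    (huniv : vertexSet Vs = Finset.univ) :
    ∃ side : α → Fin t, ∀ v i, v ∈ Vs i ↔ side v = i := by
  have h : ∀ v, ∃ i, v ∈ Vs i := fun v => by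
    have : v ∈ vertexSet Vs := by rw [huniv]; exact Finset.mem_univ v
    simpa [vertexSet] using this
  choose side hs using h
  refine ⟨side, fun v i => ⟨fun hv => ?_, fun h => h ▸ hs v⟩⟩
  by_contra hne
  exact Finset.disjoint_left.1 (hdisj _ _ hne) (hs v) hv

lemma isEdge_iff {α : Type*} [DecidableEq α] [Fintype α] {t s : ℕ} (Vs : Fin t → Finset α)
    (huniv : vertexSet Vs = Finset.univ) (side : α → Fin t)
    (hside : ∀ v i, v ∈ Vs i ↔ side v = i) (e : Finset α) :
    IsEdge Vs s e ↔ e.card = s ∧ Set.InjOn side e := by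
  rw [IsEdge, huniv]
  simp only [Finset.subset_univ, true_and, Finset.card_le_one, Finset.mem_inter, hside]
  refine and_congr_right fun _ => ⟨fun h a ha b hb hab => ?_, fun h i a ha b hb => ?_⟩
  · exact h (side b) a ⟨ha, hab⟩ b ⟨hb, rfl⟩
  · exact h ha.1 hb.1 (ha.2.trans hb.2.symm)

lemma height_le_sides (K : Type*) [Field K] {α : Type*} [DecidableEq α] [Fintype α] {t s : ℕ}
    (Vs : Fin t → Finset α)
    (huniv : vertexSet Vs = Finset.univ) (side : α → Fin t)
    (hside : ∀ v i, v ∈ Vs i ↔ side v = i) (T : Finset (Fin t)) (hT : t < T.card + s) :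
    (edgeIdeal K Vs s).height ≤ (T.biUnion Vs).card := by
  apply height_le_cover
  intro e he
  rw [isEdge_iff Vs huniv side hside] at he
  by_contra! hcon
  have h1 : e.image side ⊆ Tᶜ := by
    intro i hi
    obtain ⟨v, hv, rfl⟩ := Finset.mem_image.1 hi
    rw [Finset.mem_compl]
    intro hT'
    exact hcon v hv (Finset.mem_biUnion.2 ⟨_, hT', (hside _ _).2 rfl⟩)
  have h2 := Finset.card_le_card h1
  rw [Finset.card_image_of_injOn he.2, Finset.card_compl, Fintype.card_fin, he.1] at h2
  have h3 := Finset.card_le_univ T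
  rw [Fintype.card_fin] at h3
  omega

lemma isEdge_image {α : Type*} [DecidableEq α] [Fintype α] {t : ℕ} (Vs : Fin t → Finset α)
    (huniv : vertexSet Vs = Finset.univ) (side : α → Fin t)
    (hside : ∀ v i, v ∈ Vs i ↔ side v = i) (g : Fin t → α) (hg : ∀ i, side (g i) = i)
    (S : Finset (Fin t)) : IsEdge Vs S.card (S.image g) := by
  rw [isEdge_iff Vs huniv side hside]
  have hl : Function.LeftInverse side g := hg
  refine ⟨Finset.card_image_of_injective _ hl.injective, ?_⟩
  intro a ha b hb hab
  simp only [Finset.coe_image, Set.mem_image] at ha hb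
  obtain ⟨i, _, rfl⟩ := ha
  obtain ⟨j, _, rfl⟩ := hb
  rw [hg, hg] at hab
  rw [hab]

lemma card_edges_full {α : Type*} [DecidableEq α] [Fintype α] {t : ℕ} (Vs : Fin t → Finset α)
    (huniv : vertexSet Vs = Finset.univ) (side : α → Fin t)
    (hside : ∀ v i, v ∈ Vs i ↔ side v = i) :
    (edgeSet Vs t).card = ∏ i, (Vs i).card := by
  rw [← Fintype.card_piFinset]
  symm
  refine Finset.card_bij (fun g _ => Finset.univ.image g) ?_ ?_ ?_
  · intro g hg
    rw [Fintype.mem_piFinset] at hg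
    rw [mem_edgeSet]
    have := isEdge_image Vs huniv side hside g (fun i => (hside _ _).1 (hg i)) Finset.univ
    simpa using this
  · intro g hg g' hg' h
    rw [Fintype.mem_piFinset] at hg hg'
    funext i
    have : g i ∈ Finset.univ.image g' := by
      rw [← h]; exact Finset.mem_image_of_mem _ (Finset.mem_univ _)
    obtain ⟨j, _, hj⟩ := Finset.mem_image.1 this
    have h1 := (hside _ _).1 (hg i)
    have h2 := (hside _ _).1 (hg' j)
    rw [hj, h1] at h2
    rw [h2, hj, ← h2]
  · intro e he
    rw [mem_edgeSet, isEdge_iff Vs huniv side hside] at he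
    have h1 : e.image side = Finset.univ := by
      rw [← Finset.card_eq_iff_eq_univ, Finset.card_image_of_injOn he.2, he.1, Fintype.card_fin]
    have h2 : ∀ i, ∃ v ∈ e, side v = i := fun i => by
      have : i ∈ e.image side := h1 ▸ Finset.mem_univ i
      simpa using this
    choose g hg hg' using h2
    refine ⟨g, ?_, ?_⟩
    · rw [Fintype.mem_piFinset]
      exact fun i => (hside _ _).2 (hg' i)
    · ext v
      simp only [Finset.mem_image, Finset.mem_univ, true_and]
      constructor
      · rintro ⟨i, rfl⟩; exact hg i
      · intro hv
        exact ⟨side v, he.2 (hg _) hv (hg' _)⟩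

lemma card_edges_ge {α : Type*} [DecidableEq α] [Fintype α] {t s : ℕ} (Vs : Fin t → Finset α)
    (huniv : vertexSet Vs = Finset.univ) (side : α → Fin t)
    (hside : ∀ v i, v ∈ Vs i ↔ side v = i) (g : Fin t → α) (hg : ∀ i, side (g i) = i)
    (U : Finset (Fin t)) (hU : U.card + 1 = s) (d d' : Fin t) (hd : d ∈ U) (hd' : d' ∈ U)
    (e e' : Finset α) (hne : e ≠ e') (he : IsEdge Vs s e) (he' : IsEdge Vs s e')
    (hde : g d ∉ e) (hde' : g d' ∉ e') :
    (Uᶜ.biUnion Vs).card + 2 ≤ (edgeSet Vs s).card := by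
  have hl : Function.LeftInverse side g := hg
  have hnot : ∀ v ∈ Uᶜ.biUnion Vs, v ∉ U.image g := by
    intro v hv hv'
    obtain ⟨i, hi, rfl⟩ := Finset.mem_image.1 hv'
    obtain ⟨j, hj, hij⟩ := Finset.mem_biUnion.1 hv
    rw [hside, hg] at hij
    subst hij
    exact Finset.mem_compl.1 hj hi
  let A := (Uᶜ.biUnion Vs).image fun v => insert v (U.image g)
  have hA : A.card = (Uᶜ.biUnion Vs).card := by
    apply Finset.card_image_of_injOn
    intro v hv w hw hvw
    simp only at hvw
    have : v ∈ insert w (U.image g) := hvw ▸ Finset.mem_insert_self _ _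
    rcases Finset.mem_insert.1 this with h | h
    · exact h
    · exact absurd h (hnot v hv)
  have hAd : ∀ f ∈ A, ∀ i ∈ U, g i ∈ f := by
    intro f hf i hi
    obtain ⟨v, _, rfl⟩ := Finset.mem_image.1 hf
    exact Finset.mem_insert_of_mem (Finset.mem_image_of_mem _ hi)
  have hAE : ∀ f ∈ A, IsEdge Vs s f := by
    intro f hf
    obtain ⟨v, hv, rfl⟩ := Finset.mem_image.1 hf
    have h0 := isEdge_image Vs huniv side hside g hg U
    rw [isEdge_iff Vs huniv side hside] at h0 ⊢
    refine ⟨by rw [Finset.card_insert_of_notMem (hnot v hv), h0.1, hU], ?_⟩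
    rw [Finset.coe_insert, Set.injOn_insert (by exact_mod_cast hnot v hv)]
    refine ⟨h0.2, ?_⟩
    rintro ⟨w, hw, hwv⟩
    obtain ⟨i, hi, rfl⟩ := Finset.mem_image.1 (Finset.mem_coe.1 hw)
    obtain ⟨j, hj, hij⟩ := Finset.mem_biUnion.1 hv
    rw [hside] at hij
    rw [hg, hij] at hwv
    subst hwv
    exact Finset.mem_compl.1 hj hi
  have h1 : e ∉ A := fun h => hde (hAd _ h _ hd)
  have h2 : e' ∉ A := fun h => hde' (hAd _ h _ hd')
  have h3 : (insert e (insert e' A)) ⊆ edgeSet Vs s := by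
    intro f hf
    rw [mem_edgeSet]
    simp only [Finset.mem_insert] at hf
    rcases hf with rfl | rfl | hf
    · exact he
    · exact he'
    · exact hAE f hf
  have h4 := Finset.card_le_card h3
  rw [Finset.card_insert_of_notMem (by simp [hne, h1]), Finset.card_insert_of_notMem h2, hA] at h4
  omega


lemma forward_lt {α : Type*} [DecidableEq α] [Fintype α] {t s : ℕ} (Vs : Fin t → Finset α)
    (huniv : vertexSet Vs = Finset.univ) (side : α → Fin t)
    (hside : ∀ v i, v ∈ Vs i ↔ side v = i) (g : Fin t → α) (hg : ∀ i, side (g i) = i)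
    (hs : 2 ≤ s) (hst : s < t)
    (H : ∀ U : Finset (Fin t), U.card + 1 = s →
      (edgeSet Vs s).card ≤ (Uᶜ.biUnion Vs).card + 1) :
    s = 2 ∧ t = 3 ∧ ∀ i : Fin t, (Vs i).card = 1 := by
  have hl : Function.LeftInverse side g := hg
  have hginj := hl.injective
  have H' : ∀ U : Finset (Fin t), U.card + 1 = s → ∀ d ∈ U, ∀ d' ∈ U, ∀ e e' : Finset α,
      e ≠ e' → IsEdge Vs s e → IsEdge Vs s e' → g d ∉ e → g d' ∉ e' → False := by
    intro U hU d hd d' hd' e e' hne he he' hde hde'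
    have h1 := H U hU
    have h2 := card_edges_ge Vs huniv side hside g hg U hU d d' hd hd' e e' hne he he' hde hde'
    omega
  have ht : t = 3 := by
    by_contra ht
    obtain ⟨U, -, hU⟩ := Finset.exists_subset_card_eq (s := (Finset.univ : Finset (Fin t)))
      (n := s - 1) (by simp; omega)
    have hUc : Uᶜ.card = t - (s - 1) := by rw [Finset.card_compl, hU, Fintype.card_fin]
    obtain ⟨a, ha, b, hb, hab⟩ := Finset.one_lt_card.1 (show 1 < Uᶜ.card by omega)
    obtain ⟨d, hd⟩ := Finset.card_pos.1 (show 0 < U.card by omega)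
    rw [Finset.mem_compl] at ha hb
    have hcard : ∀ a b d, a ∉ U → b ∉ U → a ≠ b → d ∈ U →
        (insert a (insert b (U.erase d))).card = s := by
      intro a b d ha hb hab hd
      rw [Finset.card_insert_of_notMem (by simp [hab, ha]),
        Finset.card_insert_of_notMem (by simp [hb]), Finset.card_erase_of_mem hd]
      omega
    have hedge : ∀ a b d, a ∉ U → b ∉ U → a ≠ b → d ∈ U →
        IsEdge Vs s ((insert a (insert b (U.erase d))).image g) := by
      intro a b d ha hb hab hd
      have := isEdge_image Vs huniv side hside g hg (insert a (insert b (U.erase d)))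
      rwa [hcard a b d ha hb hab hd] at this
    have hmiss : ∀ a b d, a ∉ U → b ∉ U → a ≠ b → d ∈ U →
        g d ∉ ((insert a (insert b (U.erase d))).image g) := by
      intro a b d ha hb hab hd h
      rw [hginj.mem_finset_image] at h
      simp only [Finset.mem_insert, Finset.mem_erase] at h
      rcases h with rfl | rfl | h
      · exact ha hd
      · exact hb hd
      · exact h.1 rfl
    by_cases hs3 : 3 ≤ s
    · obtain ⟨d, hd, d', hd', hdd⟩ := Finset.one_lt_card.1 (show 1 < U.card by omega)
      refine H' U (by omega) d hd d' hd' _ _ ?_ (hedge a b d ha hb hab hd)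
        (hedge a b d' ha hb hab hd') (hmiss a b d ha hb hab hd) (hmiss a b d' ha hb hab hd')
      intro h
      have := hmiss a b d' ha hb hab hd'
      rw [← h, hginj.mem_finset_image] at this
      simp [hd', Ne.symm hdd] at this
    · obtain ⟨c, hc, hc'⟩ := Finset.exists_mem_notMem_of_card_lt_card
        (show ({a, b} : Finset (Fin t)).card < Uᶜ.card by
          rw [Finset.card_pair hab]; omega)
      rw [Finset.mem_compl] at hc
      simp only [Finset.mem_insert, Finset.mem_singleton, not_or] at hc'
      refine H' U (by omega) d hd d hd _ _ ?_ (hedge a b d ha hb hab hd)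
        (hedge a c d ha hc (Ne.symm hc'.1) hd) (hmiss a b d ha hb hab hd)
        (hmiss a c d ha hc (Ne.symm hc'.1) hd)
      intro h
      have := Finset.image_injective hginj h
      have h5 : c ∈ insert a (insert b (U.erase d)) := by rw [this]; simp
      simp [hc'.1, hc'.2, hc] at h5
  have hs2 : s = 2 := by omega
  refine ⟨hs2, ht, fun i => ?_⟩
  by_contra hi
  have hpos : 0 < (Vs i).card := Finset.card_pos.2 ⟨g i, (hside _ _).2 (hg i)⟩
  obtain ⟨w, hw, hwg⟩ := Finset.exists_mem_ne (show 1 < (Vs i).card by omega) (g i)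
  have hc : ({i} : Finset (Fin t))ᶜ.card = 2 := by
    rw [Finset.card_compl, Fintype.card_fin, Finset.card_singleton]; omega
  obtain ⟨b, d, hbd, hbd'⟩ := Finset.card_eq_two.1 hc
  have hb : b ≠ i := by
    have : b ∈ ({i} : Finset (Fin t))ᶜ := by rw [hbd']; simp
    simpa using this
  have hd : d ≠ i := by
    have : d ∈ ({i} : Finset (Fin t))ᶜ := by rw [hbd']; simp
    simpa using this
  have hwi := (hside _ _).1 hw
  have hg' : ∀ j, side (Function.update g i w j) = j := by
    intro j
    by_cases hj : j = i
    · subst hj; simpa using hwi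
    · rw [Function.update_of_ne hj, hg]
  have hib : ({i, b} : Finset (Fin t)).card = s := by rw [Finset.card_pair (Ne.symm hb), hs2]
  have e1 := isEdge_image Vs huniv side hside g hg {i, b}
  have e2 := isEdge_image Vs huniv side hside _ hg' {i, b}
  rw [hib] at e1 e2
  have hgdi : g d ≠ g i := fun h => hd (hginj h)
  have hgdb : g d ≠ g b := fun h => hbd (hginj h).symm
  have hgdw : g d ≠ w := fun h => hd (by rw [← hg d, h, hwi])
  have hwb : w ≠ g b := fun h => hb (by rw [← hg b, ← h, hwi])
  refine H' {d} (by rw [Finset.card_singleton]; omega) d (by simp) d (by simp) _ _ ?_ e1 e2 ?_ ?_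
  · intro h
    have : w ∈ ({i, b} : Finset (Fin t)).image g := by rw [h]; simp
    simp only [Finset.image_insert, Finset.image_singleton, Finset.mem_insert,
      Finset.mem_singleton] at this
    tauto
  · simp [hgdi, hgdb]
  · simp [hgdw, hgdb, Function.update_of_ne hb]

lemma forward_eq {t : ℕ} (n : Fin t → ℕ) (ht : 2 ≤ t) (hpos : ∀ i, 0 < n i)
    (h2 : 2 ≤ ∏ i, n i) (h : ∀ i, ∏ j, n j ≤ n i + 1) :
    ∃ j, n j = 2 ∧ ∀ i, i ≠ j → n i = 1 := by
  have hex : ∃ j, 2 ≤ n j := by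
    by_contra! hcon
    have : ∏ i, n i = 1 := Finset.prod_eq_one fun i _ => by
      have := hpos i; have := hcon i; omega
    omega
  obtain ⟨j, hj⟩ := hex
  have h1 : ∀ i, i ≠ j → n i = 1 := by
    intro i hij
    have hle : n i * n j ≤ ∏ k, n k := by
      rw [← Finset.prod_pair hij]
      exact Finset.prod_le_prod_of_subset_of_one_le' (Finset.subset_univ _) fun k _ _ => hpos k
    have := h i
    have := hpos i
    nlinarith
  refine ⟨j, ?_, h1⟩
  have : Nontrivial (Fin t) := Fin.nontrivial_iff_two_le.2 ht
  obtain ⟨i, hi⟩ := exists_ne j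
  have hj' : n j ≤ ∏ k, n k :=
    Finset.single_le_prod' (f := n) (fun k _ => hpos k) (Finset.mem_univ j)
  have := h i
  rw [h1 i hi] at this
  omega

/-- `R/I(H)` is an almost complete intersection — the minimal number
of generators of the edge ideal equals its height plus one — if and only if either
(a) `s = 2`, `t = 3` and every side is a singleton (`H` is the `3`-cycle), or
(b) `s = t`, exactly one side has two vertices and all the other `t - 1` sides are
singletons (`H` has exactly two edges). -/
theorem almost_complete_intersection_iff
    (K : Type*) [Field K] {α : Type*} [DecidableEq α] [Fintype α] {t s : ℕ}
    (hs : 2 ≤ s) (hst : s ≤ t)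
    (Vs : Fin t → Finset α)
    (hdisj : ∀ i j : Fin t, i ≠ j → Disjoint (Vs i) (Vs j))
    (hne : ∀ i : Fin t, (Vs i).Nonempty)
    (huniv : vertexSet Vs = Finset.univ) :
    (minNumGens (edgeIdeal K Vs s) : ℕ∞) = idealHeight (edgeIdeal K Vs s) + 1 ↔
      ((s = 2 ∧ t = 3 ∧ ∀ i : Fin t, (Vs i).card = 1) ∨
        (s = t ∧ ∃ j : Fin t, (Vs j).card = 2 ∧
          ∀ i : Fin t, i ≠ j → (Vs i).card = 1)) := by
  obtain ⟨side, hside⟩ := exists_side Vs hdisj huniv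
  have hg0 : ∀ i, ∃ v, side v = i := fun i => by
    obtain ⟨v, hv⟩ := hne i
    exact ⟨v, (hside _ _).1 hv⟩
  choose g hg using hg0
  rw [minNumGens_edgeIdeal, idealHeight_eq_height]
  have hbi : ∀ i, ({i} : Finset (Fin t)).biUnion Vs = Vs i := fun i => by simp
  have hone : 1 ≤ (edgeIdeal K Vs s).height := by
    obtain ⟨S, -, hS⟩ := Finset.exists_subset_card_eq (s := (Finset.univ : Finset (Fin t)))
      (n := s) (by simpa using hst)
    have := isEdge_image Vs huniv side hside g hg S
    rw [hS] at this
    exact one_le_height K Vs s _ this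
  constructor
  · intro h
    rcases hst.lt_or_eq with hlt | rfl
    · left
      refine forward_lt Vs huniv side hside g hg hs hlt fun U hU => ?_
      have h1 := height_le_sides K (s := s) Vs huniv side hside Uᶜ
        (by rw [Finset.card_compl, Fintype.card_fin]; omega)
      have h2 : ((edgeSet Vs s).card : ℕ∞) ≤ ((Uᶜ.biUnion Vs).card : ℕ∞) + 1 := by
        rw [h]; exact add_le_add_left h1 1
      exact_mod_cast h2
    · right
      refine ⟨rfl, ?_⟩
      have hE := card_edges_full Vs huniv side hside
      refine forward_eq (fun i => (Vs i).card) hs (fun i => Finset.card_pos.2 (hne i)) ?_ ?_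
      · rw [← hE]
        have h2 : (2 : ℕ∞) ≤ ((edgeSet Vs s).card : ℕ∞) := by
          rw [h]
          calc (2 : ℕ∞) = 1 + 1 := by norm_num
            _ ≤ _ := add_le_add_left hone 1
        exact_mod_cast h2
      · intro i
        rw [← hE]
        have h1 := height_le_sides K (s := s) Vs huniv side hside {i} (by simp)
        rw [hbi] at h1
        have h2 : ((edgeSet Vs s).card : ℕ∞) ≤ ((Vs i).card : ℕ∞) + 1 := by
          rw [h]; exact add_le_add_left h1 1
        exact_mod_cast h2
  · rintro (⟨rfl, rfl, h1⟩ | ⟨rfl, j, hj, h1⟩)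
    · have hsinj : Function.Injective side := by
        intro a b hab
        exact Finset.card_le_one.1 (h1 (side b)).le a ((hside _ _).2 hab) b ((hside _ _).2 rfl)
      have hbij : Function.Bijective side := ⟨hsinj, fun i => ⟨g i, hg i⟩⟩
      have hcα : Fintype.card α = 3 := by
        rw [Fintype.card_of_bijective hbij, Fintype.card_fin]
      have hE : edgeSet Vs 2 = Finset.powersetCard 2 Finset.univ := by
        ext e
        rw [mem_edgeSet, isEdge_iff Vs huniv side hside, Finset.mem_powersetCard]
        simp [hsinj.injOn]
      have hEc : (edgeSet Vs 2).card = 3 := by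
        rw [hE, Finset.card_powersetCard, Finset.card_univ, hcα]; rfl
      have hle := height_le_sides K (s := 2) Vs huniv side hside {0, 1} (by decide)
      have hc2 : (({0, 1} : Finset (Fin 3)).biUnion Vs).card = 2 := by
        rw [Finset.card_biUnion (fun i _ k _ hik => hdisj i k hik)]
        simp [h1]
      rw [hc2] at hle
      have hed : ∀ x y : α, x ≠ y → IsEdge Vs 2 {x, y} := fun x y hxy => by
        rw [isEdge_iff Vs huniv side hside]
        exact ⟨Finset.card_pair hxy, hsinj.injOn⟩
      have hgn : ∀ i k, i ≠ k → g i ≠ g k := fun i k hik h => hik (by rw [← hg i, h, hg])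
      have h01 := hgn 0 1 (by decide)
      have h02 := hgn 0 2 (by decide)
      have h12 := hgn 1 2 (by decide)
      have hge := two_le_height K Vs (g 0) (g 1) (g 2) h01 h02 h12
        (hed _ _ h01) (hed _ _ h02) (hed _ _ h12)
      have heq : (edgeIdeal K Vs 2).height = 2 := le_antisymm (by exact_mod_cast hle) hge
      rw [heq, hEc]; norm_num
    · have hEc : (edgeSet Vs s).card = 2 := by
        rw [card_edges_full Vs huniv side hside, Finset.prod_eq_single j (fun i _ h => h1 i h)
          (by simp), hj]
      have : Nontrivial (Fin s) := Fin.nontrivial_iff_two_le.2 hs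
      obtain ⟨i, hi⟩ := exists_ne j
      have hle := height_le_sides K (s := s) Vs huniv side hside {i} (by simp)
      rw [hbi, h1 i hi] at hle
      have heq : (edgeIdeal K Vs s).height = 1 := le_antisymm (by exact_mod_cast hle) hone
      rw [heq, hEc]; norm_num
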